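/- For the square lattice with free boundary conditions in both diagonal directions, the zero-energy ground state is at most unique: for all integers a, b ≥ 1, the hard-core fermion model on the graph with vertex set {(x,y) ∈ ℤ² : 0 ≤ x+y ≤ a−1 and 0 ≤ x−y ≤ b−1} and edges between points at Euclidean distance 1 satisfies dim ker H ≤ 1. -/

import Mathlib

/-! ### The supersymmetric hard-core fermion model on a graph

For a finite simple graph `G` with totally ordered vertex set, the Hilbert space has an
orthonormal basis `{|I⟩ : I an independent set of G}`, the supercharge acts by
`Q|I⟩ = Σ_v ε(v,I) |I ∪ {v}⟩` (sum over `v ∉ I` with `I ∪ {v}` independent,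
`ε(v,I) = (−1)^{#{w ∈ I : w < v}}`), and the Hamiltonian is `H = Q Q† + Q† Q`. -/

open scoped BigOperators

/-- A finite set of vertices is independent if it contains no edge of `G`. -/
def Indep {V : Type*} (G : SimpleGraph V) (I : Finset V) : Prop :=
  ∀ ⦃a⦄, a ∈ I → ∀ ⦃b⦄, b ∈ I → ¬ G.Adj a b

lemma Indep.mono {V : Type*} {G : SimpleGraph V} {I J : Finset V}
    (hI : Indep G I) (hJI : J ⊆ I) : Indep G J :=
  fun _ ha _ hb => hI (hJI ha) (hJI hb)

/-- The independent sets of `G`, indexing the orthonormal basis of the Hilbert space. -/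
def IndepSet {V : Type*} (G : SimpleGraph V) : Type _ := {I : Finset V // Indep G I}

noncomputable instance {V : Type*} [Fintype V] [LinearOrder V] (G : SimpleGraph V) :
    Fintype (IndepSet G) := by
  classical exact Subtype.fintype _

instance {V : Type*} [LinearOrder V] (G : SimpleGraph V) : DecidableEq (IndepSet G) := by
  unfold IndepSet; infer_instance

/-- The Hilbert space `ℋ_G` of the hard-core fermion model: one orthonormal basis state
`|I⟩` for every independent set `I` of `G`. -/
noncomputable abbrev FockSpace {V : Type*} [Fintype V] [LinearOrder V] (G : SimpleGraph V) :=
  EuclideanSpace ℂ (IndepSet G)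

/-- The fermionic sign `ε(v, I) = (−1)^{#{w ∈ I : w < v}}`. -/
def fsign {V : Type*} [LinearOrder V] (I : Finset V) (v : V) : ℂ :=
  (-1) ^ (I.filter (· < v)).card

/-- The supercharge `Q`, with `Q|I⟩ = Σ_v ε(v,I) |I ∪ {v}⟩` over vertices `v ∉ I` such that
`I ∪ {v}` is independent; equivalently `(Qψ)(J) = Σ_{v ∈ J} ε(v, J∖{v}) ψ(J∖{v})`. -/
noncomputable def supercharge {V : Type*} [Fintype V] [LinearOrder V] (G : SimpleGraph V) :
    FockSpace G →ₗ[ℂ] FockSpace G where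
  toFun ψ := WithLp.toLp 2 fun J => ∑ v ∈ J.1, fsign (J.1.erase v) v *
      ψ ⟨J.1.erase v, J.2.mono (Finset.erase_subset v J.1)⟩
  map_add' ψ φ := by
    ext J
    simp only [PiLp.add_apply, ← Finset.sum_add_distrib, ← mul_add]
    rfl
  map_smul' c ψ := by
    ext J
    simp [Finset.mul_sum]
    exact Finset.sum_congr rfl fun v _ => (mul_left_comm c _ _).symm

/-- The Hamiltonian `H = Q Q† + Q† Q` of the supersymmetric hard-core fermion model. -/
noncomputable def hamiltonian {V : Type*} [Fintype V] [LinearOrder V] (G : SimpleGraph V) :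
    FockSpace G →ₗ[ℂ] FockSpace G :=
  supercharge G ∘ₗ LinearMap.adjoint (supercharge G)
    + LinearMap.adjoint (supercharge G) ∘ₗ supercharge G

/-- The fermion-number operator `F`, with `F|I⟩ = |I| · |I⟩`. -/
noncomputable def numberOp {V : Type*} [Fintype V] [LinearOrder V] (G : SimpleGraph V) :
    FockSpace G →ₗ[ℂ] FockSpace G where
  toFun ψ := WithLp.toLp 2 fun I => (I.1.card : ℂ) * ψ I
  map_add' ψ φ := by ext I; simp [mul_add]
  map_smul' c ψ := by ext I; simp [mul_left_comm]

/-- The bosonic subspace: the span of the basis states `|I⟩` with `|I|` even. -/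
noncomputable def bosonic {V : Type*} [Fintype V] [LinearOrder V] (G : SimpleGraph V) :
    Submodule ℂ (FockSpace G) :=
  Submodule.span ℂ
    {e : FockSpace G | ∃ I : IndepSet G, Even I.1.card ∧ e = EuclideanSpace.single I 1}

/-- The fermionic subspace: the span of the basis states `|I⟩` with `|I|` odd. -/
noncomputable def fermionic {V : Type*} [Fintype V] [LinearOrder V] (G : SimpleGraph V) :
    Submodule ℂ (FockSpace G) :=
  Submodule.span ℂ
    {e : FockSpace G | ∃ I : IndepSet G, Odd I.1.card ∧ e = EuclideanSpace.single I 1}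

/-! ### A finite square-lattice region with free boundary conditions in both
diagonal directions -/

/-- The diamond-shaped region `{(x,y) ∈ ℤ² : 0 ≤ x+y ≤ a−1, 0 ≤ x−y ≤ b−1}`. -/
abbrev DiamondRegion (a b : ℕ) : Type :=
  {p : ℤ × ℤ // 0 ≤ p.1 + p.2 ∧ p.1 + p.2 ≤ (a : ℤ) - 1 ∧
    0 ≤ p.1 - p.2 ∧ p.1 - p.2 ≤ (b : ℤ) - 1}

/-- The square-lattice graph on the diamond region: edges between points at Euclidean
distance `1`. -/
def diamondGraph (a b : ℕ) : SimpleGraph (DiamondRegion a b) where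
  Adj p q := ((p : ℤ × ℤ).1 - (q : ℤ × ℤ).1) ^ 2 + ((p : ℤ × ℤ).2 - (q : ℤ × ℤ).2) ^ 2 = 1
  symm := by
    constructor
    intro p q h
    linear_combination h
  loopless := by
    constructor
    intro p h
    simp at h

/-!
The adjoint `Q†` is the boundary operator `∂` of the independence complex. A state of zero energy
is killed by `Q` and by `Q†`, and `ker Q` is orthogonal to the range of `Q†`, so `ker H` embeds
into the homology of that complex, whose total dimension on the induced subgraph `G[S]` is `β(S)`.
The long exact sequence of a vertex `v ∈ S` gives `β(S) ≤ β(S \ {v}) + β(S \ N[v])`, and `β`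
vanishes as soon as there is an isolated vertex. Hence `β` does not decrease when `v` is deleted
although some `u` satisfies `N(u) ⊆ N(v)`, nor when the neighbour of a leaf is deleted together
with its closed neighbourhood.

In the coordinates `x + y` (row) and `x - y` (column) all edges are diagonal. Once nothing lies
below row `s`, every vertex of row `s + 2` can be deleted because of the vertex of row `s` in its
column. The rows `s` and `s + 1` are then cut off from the rows `≥ s + 3` and form paths, which
leaf removals consume three columns at a time. Repeating this from row `s + 3` ends at `β(∅) ≤ 1`.
-/

section FermionOperators

variable {V : Type*} [LinearOrder V]

lemma fsign_mul_self (I : Finset V) (v : V) : fsign I v * fsign I v = 1 := by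
  simp [fsign, ← mul_pow]

lemma star_fsign (I : Finset V) (v : V) : star (fsign I v) = fsign I v := by
  simp [fsign]

lemma fsign_insert {I : Finset V} {u : V} (hu : u ∉ I) (v : V) :
    fsign (insert u I) v = (if u < v then -1 else 1) * fsign I v := by
  unfold fsign
  rw [Finset.filter_insert]
  split_ifs with huv
  · rw [Finset.card_insert_of_notMem (by simp [hu]), pow_succ']
  · rw [one_mul]

lemma fsign_insert_mul_fsign_insert {I : Finset V} {u v : V} (huv : u ≠ v) (hu : u ∉ I)
    (hv : v ∉ I) :
    fsign (insert v I) u * fsign (insert u I) v = -(fsign I v * fsign I u) := by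
  rw [fsign_insert hu, fsign_insert hv]
  rcases huv.lt_or_gt with h | h <;> simp [h, h.not_gt, mul_comm]

lemma fsign_mul_fsign_insert {I : Finset V} {u v : V} (huv : u ≠ v) (hu : u ∉ I)
    (hv : v ∉ I) :
    fsign I u * fsign (insert u I) v = -(fsign I v * fsign (insert v I) u) := by
  rw [fsign_insert hu, fsign_insert hv]
  rcases huv.lt_or_gt with h | h <;> simp [h, h.not_gt, mul_comm]

/-- The fermionic annihilation operator `a_v`. It acts on the full Fock space `Finset V → ℂ`,
without the hard-core constraint, where it satisfies the canonical anticommutation relations. -/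
noncomputable def annihilate (v : V) : Module.End ℂ (Finset V → ℂ) where
  toFun ψ I := if v ∈ I then 0 else fsign I v * ψ (insert v I)
  map_add' ψ φ := by ext I; simp only [Pi.add_apply]; split_ifs <;> ring
  map_smul' c ψ := by
    ext I; simp only [Pi.smul_apply, smul_eq_mul, RingHom.id_apply]; split_ifs <;> ring

/-- The fermionic creation operator `a_v†` on the full Fock space `Finset V → ℂ`. -/
noncomputable def create (v : V) : Module.End ℂ (Finset V → ℂ) where
  toFun ψ I := if v ∈ I then fsign (I.erase v) v * ψ (I.erase v) else 0
  map_add' ψ φ := by ext I; simp only [Pi.add_apply]; split_ifs <;> ring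
  map_smul' c ψ := by
    ext I; simp only [Pi.smul_apply, smul_eq_mul, RingHom.id_apply]; split_ifs <;> ring

lemma annihilate_apply (v : V) (ψ : Finset V → ℂ) (I : Finset V) :
    annihilate v ψ I = if v ∈ I then 0 else fsign I v * ψ (insert v I) := rfl

lemma create_apply (v : V) (ψ : Finset V → ℂ) (I : Finset V) :
    create v ψ I = if v ∈ I then fsign (I.erase v) v * ψ (I.erase v) else 0 := rfl

lemma annihilate_create_apply (v : V) (ψ : Finset V → ℂ) (I : Finset V) :
    annihilate v (create v ψ) I = if v ∈ I then 0 else ψ I := by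
  rw [annihilate_apply]
  split_ifs with hv
  · rfl
  · rw [create_apply, if_pos (Finset.mem_insert_self v I), Finset.erase_insert hv, ← mul_assoc,
      fsign_mul_self, one_mul]

lemma create_annihilate_apply (v : V) (ψ : Finset V → ℂ) (I : Finset V) :
    create v (annihilate v ψ) I = if v ∈ I then ψ I else 0 := by
  rw [create_apply]
  split_ifs with hv
  · rw [annihilate_apply, if_neg (Finset.notMem_erase v I), Finset.insert_erase hv, ← mul_assoc,
      fsign_mul_self, one_mul]
  · rfl

lemma annihilate_mul_create_self (v : V) :
    annihilate v * create v + create v * annihilate v = 1 := by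
  refine LinearMap.ext fun ψ ↦ funext fun I ↦ ?_
  change annihilate v (create v ψ) I + create v (annihilate v ψ) I = ψ I
  rw [annihilate_create_apply, create_annihilate_apply]
  split_ifs <;> simp

lemma annihilate_mul_create_of_ne {u v : V} (huv : u ≠ v) :
    annihilate u * create v + create v * annihilate u = 0 := by
  refine LinearMap.ext fun ψ ↦ funext fun I ↦ ?_
  change annihilate u (create v ψ) I + create v (annihilate u ψ) I = 0
  simp only [annihilate_apply, create_apply]
  by_cases hv : v ∈ I
  · by_cases hu : u ∈ I
    · simp [hu, hv, huv]
    · obtain ⟨K, hvK, rfl⟩ : ∃ K : Finset V, v ∉ K ∧ insert v K = I :=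
        ⟨I.erase v, Finset.notMem_erase v I, Finset.insert_erase hv⟩
      have huK : u ∉ K := fun h ↦ hu (Finset.mem_insert_of_mem h)
      have erase_eq : (insert u (insert v K)).erase v = insert u K := by
        rw [Finset.insert_comm, Finset.erase_insert (by simp [hvK, huv.symm])]
      rw [if_neg hu, if_pos (by simp), if_pos hv, erase_eq, Finset.erase_insert hvK, if_neg huK,
        ← mul_assoc, ← mul_assoc, fsign_insert_mul_fsign_insert huv huK hvK]
      ring
  · simp [hv, huv.symm]

lemma annihilate_mul_annihilate (u v : V) :
    annihilate u * annihilate v = -(annihilate v * annihilate u) := by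
  refine LinearMap.ext fun ψ ↦ funext fun I ↦ ?_
  change annihilate u (annihilate v ψ) I = -annihilate v (annihilate u ψ) I
  simp only [annihilate_apply]
  by_cases huv : u = v
  · simp [huv]
  by_cases hu : u ∈ I
  · simp [hu]
  by_cases hv : v ∈ I
  · simp [hv]
  rw [if_neg hu, if_neg hv, if_neg (by simp [hv, Ne.symm huv]), if_neg (by simp [hu, huv]),
    Finset.insert_comm v u, ← mul_assoc, ← mul_assoc, fsign_mul_fsign_insert huv hu hv, neg_mul]

variable [Fintype V]

open scoped Matrix in
lemma star_annihilate_dotProduct (v : V) (ψ φ : Finset V → ℂ) :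
    star (annihilate v ψ) ⬝ᵥ φ = star ψ ⬝ᵥ create v φ := by
  simp only [dotProduct, Pi.star_apply, annihilate_apply, create_apply, apply_ite star, star_zero,
    ite_mul, zero_mul, mul_ite, mul_zero, star_mul', star_fsign]
  simp_rw [← ite_not (v ∈ _) _ (0 : ℂ)]
  rw [← Finset.sum_filter, ← Finset.sum_filter]
  refine Finset.sum_nbij' (insert v) (Finset.erase · v) ?_ ?_ ?_ ?_ ?_
  · simp
  · simp
  · simp +contextual
  · simp +contextual [Finset.insert_erase]
  · intro I hI
    rw [Finset.erase_insert (by simpa using hI)]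
    ring

/-- The boundary operator `∂ = ∑ a_v` of the simplex on the vertices `V`, augmented by the empty
face. On functions supported on independent sets it is the adjoint `Q†` of the supercharge. -/
noncomputable def boundary (V : Type*) [LinearOrder V] [Fintype V] :
    Module.End ℂ (Finset V → ℂ) :=
  ∑ v, annihilate v

lemma boundary_mul_create (v : V) : boundary V * create v + create v * boundary V = 1 := by
  rw [boundary, Finset.sum_mul, Finset.mul_sum, ← Finset.sum_add_distrib, Finset.sum_eq_single v]
  · exact annihilate_mul_create_self v
  · exact fun u _ huv ↦ annihilate_mul_create_of_ne huv
  · simp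

lemma boundary_mul_annihilate (v : V) :
    boundary V * annihilate v = -(annihilate v * boundary V) := by
  simp_rw [boundary, Finset.sum_mul, Finset.mul_sum, annihilate_mul_annihilate _ v,
    Finset.sum_neg_distrib]

lemma boundary_create_apply (v : V) (ψ : Finset V → ℂ) :
    boundary V (create v ψ) = ψ - create v (boundary V ψ) :=
  eq_sub_of_add_eq (LinearMap.congr_fun (boundary_mul_create v) ψ)

lemma boundary_annihilate_apply (v : V) (ψ : Finset V → ℂ) :
    boundary V (annihilate v ψ) = -annihilate v (boundary V ψ) :=
  LinearMap.congr_fun (boundary_mul_annihilate v) ψ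

lemma boundary_boundary_apply (ψ : Finset V → ℂ) : boundary V (boundary V ψ) = 0 :=
  self_eq_neg.mp <| calc
    boundary V (boundary V ψ) = ∑ v, boundary V (annihilate v ψ) := by
      rw [← map_sum, ← LinearMap.sum_apply, ← boundary]
    _ = -∑ v, annihilate v (boundary V ψ) := by
      simp_rw [boundary_annihilate_apply, Finset.sum_neg_distrib]
    _ = -boundary V (boundary V ψ) := by rw [← LinearMap.sum_apply, ← boundary]

end FermionOperators

section IndependenceComplex

variable {V : Type*}

lemma Indep.insert [DecidableEq V] {G : SimpleGraph V} {I : Finset V} {v : V} (hI : Indep G I)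
    (hv : ∀ x ∈ I, ¬ G.Adj v x) : Indep G (insert v I) := by
  intro x hx y hy hxy
  rcases Finset.mem_insert.mp hx with rfl | hxI <;> rcases Finset.mem_insert.mp hy with rfl | hyI
  · exact G.irrefl hxy
  · exact hv y hyI hxy
  · exact hv x hxI hxy.symm
  · exact hI hxI hyI hxy

/-- The chains of the independence complex of `G[S]`: functions supported on the independent sets
of `G` contained in `S`. -/
def indepChains (G : SimpleGraph V) (S : Set V) : Submodule ℂ (Finset V → ℂ) where
  carrier := {ψ | Function.support ψ ⊆ {I | Indep G I ∧ (I : Set V) ⊆ S}}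
  zero_mem' := by simp
  add_mem' hψ hφ := (Function.support_add _ _).trans (Set.union_subset hψ hφ)
  smul_mem' c _ hψ := (Function.support_const_smul_subset c _).trans hψ

variable {G : SimpleGraph V} {S T : Set V} {u v : V} {ψ : Finset V → ℂ}

lemma mem_indepChains : ψ ∈ indepChains G S ↔ ∀ I, ψ I ≠ 0 → Indep G I ∧ ↑I ⊆ S := Iff.rfl

lemma indepChains_mono (hST : S ⊆ T) : indepChains G S ≤ indepChains G T :=
  fun _ hψ _ hI ↦ ⟨(hψ hI).1, (hψ hI).2.trans hST⟩

variable [LinearOrder V]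

lemma annihilate_mem_indepChains (hψ : ψ ∈ indepChains G S) (v : V) :
    annihilate v ψ ∈ indepChains G (S \ insert v (G.neighborSet v)) := by
  rw [mem_indepChains]
  intro I hI
  rw [annihilate_apply, ite_ne_left_iff] at hI
  obtain ⟨hvI, hI⟩ := hI
  obtain ⟨hindep, hsub⟩ := hψ (right_ne_zero_of_mul hI.symm)
  rw [Finset.coe_insert, Set.insert_subset_iff] at hsub
  refine ⟨hindep.mono (Finset.subset_insert v I), fun x hx ↦ ⟨hsub.2 hx, ?_⟩⟩
  rintro (rfl | hvx)
  · exact hvI hx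
  · exact hindep (Finset.mem_insert_self v I) (Finset.mem_insert_of_mem hx) hvx

lemma create_mem_indepChains (hv : v ∈ S) (hψ : ψ ∈ indepChains G (S \ G.neighborSet v)) :
    create v ψ ∈ indepChains G S := by
  rw [mem_indepChains]
  intro I hI
  rw [create_apply, ite_ne_right_iff] at hI
  obtain ⟨hvI, hI⟩ := hI
  obtain ⟨hindep, hsub⟩ := hψ (right_ne_zero_of_mul hI)
  rw [← Finset.insert_erase hvI]
  refine ⟨hindep.insert fun x hx ↦ (hsub hx).2, ?_⟩
  rw [Finset.coe_insert, Set.insert_subset_iff]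
  exact ⟨hv, hsub.trans Set.sdiff_subset⟩

lemma annihilate_create_mem_indepChains (hψ : ψ ∈ indepChains G S) (v : V) :
    annihilate v (create v ψ) ∈ indepChains G (S \ {v}) := by
  rw [mem_indepChains]
  intro I hI
  rw [annihilate_create_apply, ite_ne_left_iff] at hI
  obtain ⟨hindep, hsub⟩ := hψ hI.2.symm
  exact ⟨hindep, Set.subset_sdiff_singleton hsub hI.1⟩

variable [Fintype V]

lemma boundary_mem_indepChains (hψ : ψ ∈ indepChains G S) : boundary V ψ ∈ indepChains G S := by
  rw [boundary, LinearMap.sum_apply]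
  exact Submodule.sum_mem _ fun v _ ↦
    indepChains_mono Set.sdiff_subset (annihilate_mem_indepChains hψ v)

/-- The cycles of the independence complex of `G[S]`. -/
noncomputable def indepCycles (G : SimpleGraph V) (S : Set V) : Submodule ℂ (Finset V → ℂ) :=
  indepChains G S ⊓ LinearMap.ker (boundary V)

lemma mem_indepCycles : ψ ∈ indepCycles G S ↔ ψ ∈ indepChains G S ∧ boundary V ψ = 0 := Iff.rfl

/-- The boundaries of the independence complex of `G[S]`. -/
noncomputable def indepBoundaries (G : SimpleGraph V) (S : Set V) :
    Submodule ℂ (Finset V → ℂ) :=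
  (indepChains G S).map (boundary V)

/-- The total reduced homology, in all degrees together, of the independence complex of `G[S]`. -/
abbrev IndepHomology (G : SimpleGraph V) (S : Set V) : Type _ :=
  ↥(indepCycles G S) ⧸ (indepBoundaries G S).submoduleOf (indepCycles G S)

lemma IndepHomology.mk_eq_zero {ψ : indepCycles G S} :
    (Submodule.Quotient.mk ψ : IndepHomology G S) = 0 ↔ ψ.1 ∈ indepBoundaries G S :=
  Submodule.Quotient.mk_eq_zero _

/-- The total reduced Betti number of the independence complex of `G[S]`. -/
noncomputable def indepBetti (G : SimpleGraph V) (S : Set V) : ℕ :=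
  Module.finrank ℂ (IndepHomology G S)

/-- The map on homology induced by an operator preserving cycles and boundaries. -/
noncomputable def IndepHomology.map (f : Module.End ℂ (Finset V → ℂ))
    (hcycles : ∀ ψ ∈ indepCycles G S, f ψ ∈ indepCycles G T)
    (hboundaries : ∀ ψ ∈ indepBoundaries G S, f ψ ∈ indepBoundaries G T) :
    IndepHomology G S →ₗ[ℂ] IndepHomology G T :=
  Submodule.mapQ _ _ (f.restrict hcycles) fun ψ hψ ↦ hboundaries ψ hψ

/-- The map on homology induced by an inclusion of vertex sets. -/
noncomputable def IndepHomology.inclusion (hST : S ⊆ T) :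
    IndepHomology G S →ₗ[ℂ] IndepHomology G T :=
  IndepHomology.map 1 (fun _ hψ ↦ ⟨indepChains_mono hST hψ.1, hψ.2⟩)
    fun _ hψ ↦ Submodule.map_mono (indepChains_mono hST) hψ

lemma annihilate_mem_indepCycles (hψ : ψ ∈ indepCycles G S) (v : V) :
    annihilate v ψ ∈ indepCycles G (S \ insert v (G.neighborSet v)) := by
  rw [mem_indepCycles] at hψ ⊢
  exact ⟨annihilate_mem_indepChains hψ.1 v, by
    rw [boundary_annihilate_apply, hψ.2, map_zero, neg_zero]⟩

lemma annihilate_mem_indepBoundaries (hψ : ψ ∈ indepBoundaries G S) (v : V) :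
    annihilate v ψ ∈ indepBoundaries G (S \ insert v (G.neighborSet v)) := by
  obtain ⟨χ, hχ, rfl⟩ := hψ
  refine ⟨-annihilate v χ, neg_mem (annihilate_mem_indepChains hχ v), ?_⟩
  rw [map_neg, boundary_annihilate_apply, neg_neg]

/-- The map on homology induced by `a_v`, the connecting map of the long exact sequence that
relates `S`, the deletion `S \ {v}` and the link `S \ N[v]`. -/
noncomputable def IndepHomology.connecting (G : SimpleGraph V) (S : Set V) (v : V) :
    IndepHomology G S →ₗ[ℂ] IndepHomology G (S \ insert v (G.neighborSet v)) :=
  IndepHomology.map (annihilate v)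
    (fun _ hψ ↦ annihilate_mem_indepCycles hψ v) fun _ hψ ↦ annihilate_mem_indepBoundaries hψ v

lemma add_boundary_create_mem_indepChains {χ : Finset V → ℂ}
    (hψ : ψ ∈ indepChains G S) (hχ : χ ∈ indepChains G (S \ insert v (G.neighborSet v)))
    (hχψ : boundary V χ = annihilate v ψ) :
    ψ + boundary V (create v χ) ∈ indepChains G (S \ {v}) := by
  have decomposition : ψ + boundary V (create v χ) = annihilate v (create v ψ) + χ := by
    have hψ_eq : annihilate v (create v ψ) + create v (annihilate v ψ) = ψ :=
      LinearMap.congr_fun (annihilate_mul_create_self v) ψ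
    rw [boundary_create_apply, hχψ, eq_sub_of_add_eq hψ_eq]
    abel
  rw [decomposition]
  exact add_mem (annihilate_create_mem_indepChains hψ v)
    (indepChains_mono (Set.sdiff_subset_sdiff_right (Set.singleton_subset_iff.mpr (.inl rfl))) hχ)

lemma IndepHomology.ker_connecting_le_range_inclusion (hv : v ∈ S) :
    LinearMap.ker (connecting G S v) ≤
      LinearMap.range (inclusion (G := G) (Set.sdiff_subset : S \ {v} ⊆ S)) := by
  intro x hx
  obtain ⟨⟨ψ, hψ⟩, rfl⟩ := Submodule.mkQ_surjective _ x
  obtain ⟨χ, hχ, hχψ⟩ : annihilate v ψ ∈ indepBoundaries G _ :=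
    IndepHomology.mk_eq_zero.mp hx
  have hcreate : create v χ ∈ indepChains G S :=
    create_mem_indepChains hv
      (indepChains_mono (Set.sdiff_subset_sdiff_right (Set.subset_insert v _)) hχ)
  have hcycle : ψ + boundary V (create v χ) ∈ indepCycles G (S \ {v}) :=
    mem_indepCycles.mpr ⟨add_boundary_create_mem_indepChains hψ.1 hχ hχψ, by
      rw [map_add, boundary_boundary_apply, (mem_indepCycles.mp hψ).2, add_zero]⟩
  refine ⟨Submodule.mkQ _ ⟨_, hcycle⟩, (Submodule.Quotient.eq _).mpr ?_⟩
  exact ⟨create v χ, hcreate, (add_sub_cancel_left ψ _).symm⟩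

lemma indepBetti_le_add (hv : v ∈ S) :
    indepBetti G S ≤ indepBetti G (S \ {v}) + indepBetti G (S \ insert v (G.neighborSet v)) :=
  let δ := IndepHomology.connecting G S v
  calc
    indepBetti G S = Module.finrank ℂ (LinearMap.ker δ) + Module.finrank ℂ (LinearMap.range δ) := by
      rw [add_comm]; exact δ.finrank_range_add_finrank_ker.symm
    _ ≤ indepBetti G (S \ {v}) + indepBetti G (S \ insert v (G.neighborSet v)) :=
      Nat.add_le_add
        ((Submodule.finrank_mono (IndepHomology.ker_connecting_le_range_inclusion hv)).trans
          (LinearMap.finrank_range_le _))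
        (Submodule.finrank_le _)

lemma indepBetti_eq_zero_of_isolated (hu : u ∈ S) (hisolated : ∀ x ∈ S, ¬ G.Adj u x) :
    indepBetti G S = 0 := by
  have hS : S \ G.neighborSet u = S := sdiff_eq_left.mpr (Set.disjoint_left.mpr hisolated)
  have cycles_le_boundaries : indepCycles G S ≤ indepBoundaries G S := fun ψ hψ ↦ by
    refine ⟨create u ψ, create_mem_indepChains hu (hS.symm ▸ hψ.1), ?_⟩
    rw [boundary_create_apply, (mem_indepCycles.mp hψ).2, map_zero, sub_zero]
  have : Subsingleton (IndepHomology G S) :=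
    Submodule.Quotient.subsingleton_iff.mpr (Submodule.submoduleOf_eq_top.mpr cycles_le_boundaries)
  exact Module.finrank_zero_of_subsingleton

lemma indepBetti_empty_le_one : indepBetti G ∅ ≤ 1 := by
  have chains_le_span : indepChains G ∅ ≤ ℂ ∙ (Pi.single ∅ 1 : Finset V → ℂ) := by
    intro ψ hψ
    refine Submodule.mem_span_singleton.mpr ⟨ψ ∅, funext fun I ↦ ?_⟩
    rcases eq_or_ne I ∅ with rfl | hI
    · simp
    · have : ψ I = 0 := by_contra fun h ↦ hI (by simpa using (hψ h).2)
      simp [hI, this]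
  calc
    indepBetti G ∅ ≤ Module.finrank ℂ (indepCycles G ∅) := Submodule.finrank_quotient_le _
    _ ≤ Module.finrank ℂ (ℂ ∙ (Pi.single ∅ 1 : Finset V → ℂ)) :=
      Submodule.finrank_mono (inf_le_left.trans chains_le_span)
    _ = 1 := finrank_span_singleton (by simp)

lemma indepBetti_le_sdiff_singleton_of_fold (hu : u ∈ S) (huv : u ≠ v)
    (hN : ∀ x ∈ S, G.Adj u x → G.Adj v x) : indepBetti G S ≤ indepBetti G (S \ {v}) := by
  by_cases hv : v ∈ S
  · have huLink : u ∈ S \ insert v (G.neighborSet v) :=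
      ⟨hu, by rintro (h | h); exacts [huv h, G.irrefl (hN v hv (G.adj_symm h))]⟩
    have link_eq_zero : indepBetti G (S \ insert v (G.neighborSet v)) = 0 :=
      indepBetti_eq_zero_of_isolated huLink fun x hx hux ↦ hx.2 (.inr (hN x hx.1 hux))
    exact (indepBetti_le_add hv).trans_eq (by rw [link_eq_zero, add_zero])
  · rw [Set.sdiff_singleton_eq_self hv]

lemma indepBetti_le_sdiff_of_fold (T : Set V)
    (hT : ∀ v ∈ T, ∃ u ∈ S \ T, ∀ x ∈ S, G.Adj u x → G.Adj v x) :
    indepBetti G S ≤ indepBetti G (S \ T) := by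
  induction T, T.toFinite using Set.Finite.induction_on generalizing S with
  | empty => rw [Set.sdiff_empty]
  | @insert v T _ _ ih =>
    obtain ⟨u, hu, hN⟩ := hT v (Set.mem_insert v T)
    calc
      indepBetti G S ≤ indepBetti G (S \ {v}) :=
        indepBetti_le_sdiff_singleton_of_fold hu.1 (fun huv ↦ hu.2 (.inl huv)) hN
      _ ≤ indepBetti G ((S \ {v}) \ T) := ih fun w hw ↦ by
        obtain ⟨y, hy, hyN⟩ := hT w (.inr hw)
        exact ⟨y, ⟨⟨hy.1, fun h ↦ hy.2 (.inl h)⟩, fun h ↦ hy.2 (.inr h)⟩, fun x hx ↦ hyN x hx.1⟩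
      _ = indepBetti G (S \ insert v T) := by rw [Set.sdiff_sdiff, Set.singleton_union]

lemma indepBetti_le_of_leaf (hu : u ∈ S) (hv : v ∈ S) (huv : u ≠ v)
    (hleaf : ∀ x ∈ S, G.Adj u x → x = v) :
    indepBetti G S ≤ indepBetti G (S \ insert v (G.neighborSet v)) := by
  have deletion_eq_zero : indepBetti G (S \ {v}) = 0 :=
    indepBetti_eq_zero_of_isolated (u := u) ⟨hu, huv⟩ fun x hx hux ↦ hx.2 (hleaf x hx.1 hux)
  exact (indepBetti_le_add hv).trans_eq (by rw [deletion_eq_zero, zero_add])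

end IndependenceComplex

section Hodge

section Adjoint

variable {𝕜 E : Type*} [RCLike 𝕜] [NormedAddCommGroup E] [InnerProductSpace 𝕜 E]
  [FiniteDimensional 𝕜 E]

lemma ker_comp_adjoint_add_adjoint_comp_le (T : E →ₗ[𝕜] E) :
    LinearMap.ker (T ∘ₗ LinearMap.adjoint T + LinearMap.adjoint T ∘ₗ T) ≤
      LinearMap.ker T ⊓ LinearMap.ker (LinearMap.adjoint T) := by
  intro x hx
  have energy : ‖LinearMap.adjoint T x‖ ^ 2 + ‖T x‖ ^ 2 = 0 := by
    have h : inner 𝕜 ((T ∘ₗ LinearMap.adjoint T + LinearMap.adjoint T ∘ₗ T) x) x = 0 := by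
      rw [LinearMap.mem_ker.mp hx, inner_zero_left]
    rw [LinearMap.add_apply, inner_add_left, LinearMap.comp_apply, LinearMap.comp_apply,
      LinearMap.adjoint_inner_left, ← LinearMap.adjoint_inner_right T (LinearMap.adjoint T x),
      inner_self_eq_norm_sq_to_K, inner_self_eq_norm_sq_to_K] at h
    exact_mod_cast h
  rw [add_eq_zero_iff_of_nonneg (sq_nonneg _) (sq_nonneg _)] at energy
  exact ⟨by simpa using energy.2, by simpa using energy.1⟩

lemma disjoint_ker_range_adjoint (T : E →ₗ[𝕜] E) :
    Disjoint (LinearMap.ker T) (LinearMap.range (LinearMap.adjoint T)) := by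
  have h := LinearMap.orthogonal_range (LinearMap.adjoint T)
  rw [LinearMap.adjoint_adjoint] at h
  exact h ▸ (Submodule.orthogonal_disjoint _).symm

end Adjoint

variable {V : Type*} [Fintype V] [LinearOrder V] {G : SimpleGraph V}

/-- The inclusion of `ℋ_G` into the full Fock space. -/
noncomputable def toFullFock (G : SimpleGraph V) : FockSpace G →ₗ[ℂ] (Finset V → ℂ) :=
  Function.ExtendByZero.linearMap ℂ (fun J : IndepSet G ↦ J.1) ∘ₗ
    (WithLp.linearEquiv 2 ℂ (IndepSet G → ℂ)).toLinearMap

lemma toFullFock_apply_val (ψ : FockSpace G) (J : IndepSet G) : toFullFock G ψ J.1 = ψ J :=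
  Subtype.val_injective.extend_apply _ _ J

lemma toFullFock_apply_of_not_indep (ψ : FockSpace G) {I : Finset V} (hI : ¬ Indep G I) :
    toFullFock G ψ I = 0 :=
  Function.extend_apply' _ _ I fun ⟨J, hJ⟩ ↦ hI (hJ ▸ J.2)

lemma toFullFock_injective : Function.Injective (toFullFock G) := fun ψ φ h ↦ by
  ext J
  rw [← toFullFock_apply_val, h, toFullFock_apply_val]

lemma range_toFullFock : LinearMap.range (toFullFock G) = indepChains G Set.univ := by
  refine le_antisymm ?_ fun χ hχ ↦ ⟨WithLp.toLp 2 fun J ↦ χ J.1, funext fun I ↦ ?_⟩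
  · rintro _ ⟨ψ, rfl⟩ I hI
    exact ⟨not_not.mp fun h ↦ hI (toFullFock_apply_of_not_indep ψ h), Set.subset_univ _⟩
  · by_cases hI : Indep G I
    · exact toFullFock_apply_val _ ⟨I, hI⟩
    · rw [toFullFock_apply_of_not_indep _ hI]
      exact (not_not.mp fun h ↦ hI (hχ h).1).symm

open scoped Matrix

lemma star_toFullFock_dotProduct (ψ : FockSpace G) (φ : Finset V → ℂ) :
    star (toFullFock G ψ) ⬝ᵥ φ = ∑ J : IndepSet G, star (ψ J) * φ J.1 := by
  refine (Fintype.sum_of_injective (fun J : IndepSet G ↦ J.1) Subtype.val_injective _ _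
    (fun I hI ↦ ?_) fun J ↦ ?_).symm
  · have : toFullFock G ψ I = 0 :=
      toFullFock_apply_of_not_indep ψ fun h ↦ hI ⟨⟨I, h⟩, rfl⟩
    rw [Pi.star_apply, this, star_zero, zero_mul]
  · rw [Pi.star_apply, ← toFullFock_apply_val ψ J]

lemma inner_eq_star_toFullFock_dotProduct (ψ φ : FockSpace G) :
    inner ℂ ψ φ = star (toFullFock G ψ) ⬝ᵥ toFullFock G φ := by
  simp_rw [star_toFullFock_dotProduct, toFullFock_apply_val, PiLp.inner_apply, RCLike.inner_apply',
    starRingEnd_apply]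

lemma supercharge_apply_eq_sum_create (ψ : FockSpace G) (J : IndepSet G) :
    supercharge G ψ J = ∑ v, create v (toFullFock G ψ) J.1 := by
  simp_rw [create_apply, Finset.sum_ite_mem, Finset.univ_inter]
  refine Finset.sum_congr rfl fun v _ ↦ congrArg _ ?_
  exact (toFullFock_apply_val ψ ⟨J.1.erase v, J.2.mono (Finset.erase_subset v J.1)⟩).symm

lemma inner_supercharge (ψ φ : FockSpace G) :
    inner ℂ ψ (supercharge G φ) = star (boundary V (toFullFock G ψ)) ⬝ᵥ toFullFock G φ :=
  calc
    inner ℂ ψ (supercharge G φ)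
      = star (toFullFock G ψ) ⬝ᵥ ∑ v, create v (toFullFock G φ) := by
        simp_rw [star_toFullFock_dotProduct, Finset.sum_apply, ← supercharge_apply_eq_sum_create,
          PiLp.inner_apply, RCLike.inner_apply', starRingEnd_apply]
    _ = star (boundary V (toFullFock G ψ)) ⬝ᵥ toFullFock G φ := by
        simp_rw [dotProduct_sum, ← star_annihilate_dotProduct, boundary, LinearMap.sum_apply,
          star_sum, sum_dotProduct]

lemma toFullFock_adjoint_supercharge (ψ : FockSpace G) :
    toFullFock G (LinearMap.adjoint (supercharge G) ψ) = boundary V (toFullFock G ψ) := by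
  have hψ : toFullFock G ψ ∈ indepChains G Set.univ := range_toFullFock.le ⟨ψ, rfl⟩
  obtain ⟨θ, hθ⟩ := range_toFullFock.ge (boundary_mem_indepChains hψ)
  rw [← hθ]
  refine congrArg _ (ext_inner_right ℂ fun φ ↦ ?_)
  rw [LinearMap.adjoint_inner_left, inner_supercharge, ← hθ, inner_eq_star_toFullFock_dotProduct]

lemma toFullFock_mem_indepCycles {ψ : FockSpace G} (hψ : LinearMap.adjoint (supercharge G) ψ = 0) :
    toFullFock G ψ ∈ indepCycles G Set.univ := by
  refine mem_indepCycles.mpr ⟨range_toFullFock.le ⟨ψ, rfl⟩, ?_⟩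
  rw [← toFullFock_adjoint_supercharge, hψ, map_zero]

lemma mem_range_adjoint_supercharge {ψ : FockSpace G}
    (hψ : toFullFock G ψ ∈ indepBoundaries G Set.univ) :
    ψ ∈ LinearMap.range (LinearMap.adjoint (supercharge G)) := by
  obtain ⟨χ, hχ, hχψ⟩ := hψ
  obtain ⟨θ, rfl⟩ := range_toFullFock.ge hχ
  exact ⟨θ, toFullFock_injective ((toFullFock_adjoint_supercharge θ).trans hχψ)⟩

theorem finrank_ker_hamiltonian_le_indepBetti :
    Module.finrank ℂ (LinearMap.ker (hamiltonian G)) ≤ indepBetti G Set.univ := by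
  have harmonic : ∀ ψ ∈ LinearMap.ker (hamiltonian G),
      ψ ∈ LinearMap.ker (supercharge G) ⊓ LinearMap.ker (LinearMap.adjoint (supercharge G)) :=
    fun ψ hψ ↦ ker_comp_adjoint_add_adjoint_comp_le (supercharge G) hψ
  let homologyClass : LinearMap.ker (hamiltonian G) →ₗ[ℂ] IndepHomology G Set.univ :=
    Submodule.mkQ _ ∘ₗ (toFullFock G).restrict fun ψ hψ ↦
      toFullFock_mem_indepCycles (LinearMap.mem_ker.mp (harmonic ψ hψ).2)
  refine LinearMap.finrank_le_finrank_of_injective (f := homologyClass)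
    ((injective_iff_map_eq_zero _).mpr fun ⟨ψ, hψ⟩ hclass ↦ Subtype.ext ?_)
  exact Submodule.disjoint_def.mp (disjoint_ker_range_adjoint (supercharge G)) ψ
    (harmonic ψ hψ).1 (mem_range_adjoint_supercharge (IndepHomology.mk_eq_zero.mp hclass))

end Hodge

namespace DiamondRegion

variable {a b : ℕ}

/-- The diagonal coordinate `x + y`. -/
def row (p : DiamondRegion a b) : ℤ := p.1.1 + p.1.2

/-- The diagonal coordinate `x - y`. -/
def col (p : DiamondRegion a b) : ℤ := p.1.1 - p.1.2

lemma row_mem_Ico (p : DiamondRegion a b) : p.row ∈ Set.Ico 0 (a : ℤ) :=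
  ⟨p.2.1, Int.le_sub_one_iff.mp p.2.2.1⟩

lemma col_mem_Ico (p : DiamondRegion a b) : p.col ∈ Set.Ico 0 (b : ℤ) :=
  ⟨p.2.2.2.1, Int.le_sub_one_iff.mp p.2.2.2.2⟩

lemma row_emod_two_eq (p : DiamondRegion a b) : p.row % 2 = p.col % 2 := by
  unfold row col
  omega

lemma ext_row_col {p q : DiamondRegion a b} (hrow : p.row = q.row) (hcol : p.col = q.col) :
    p = q := by
  unfold row at hrow
  unfold col at hcol
  exact Subtype.ext (Prod.ext (by omega) (by omega))

lemma exists_row_eq_sub_two (p : DiamondRegion a b) (hp : 2 ≤ p.row) :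
    ∃ q : DiamondRegion a b, q.row = p.row - 2 ∧ q.col = p.col := by
  obtain ⟨⟨x, y⟩, h⟩ := p
  simp only [row, col] at hp ⊢
  exact ⟨⟨(x - 1, y - 1), by omega⟩, by dsimp only; omega, by dsimp only; omega⟩

end DiamondRegion

section Diamond

open DiamondRegion

variable {a b : ℕ}

lemma sq_add_sq_eq_one_iff {x y : ℤ} :
    x ^ 2 + y ^ 2 = 1 ↔ (x + y = 1 ∨ x + y = -1) ∧ (x - y = 1 ∨ x - y = -1) := by
  constructor
  · intro h
    have hx : -1 ≤ x ∧ x ≤ 1 := ⟨by nlinarith, by nlinarith⟩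
    have hy : -1 ≤ y ∧ y ≤ 1 := ⟨by nlinarith, by nlinarith⟩
    obtain ⟨hx₁, hx₂⟩ := hx
    obtain ⟨hy₁, hy₂⟩ := hy
    interval_cases x <;> interval_cases y <;> simp_all
  · intro h
    have unit_vector : (x = 0 ∧ (y = 1 ∨ y = -1)) ∨ ((x = 1 ∨ x = -1) ∧ y = 0) := by omega
    rcases unit_vector with ⟨rfl, rfl | rfl⟩ | ⟨rfl | rfl, rfl⟩ <;> norm_num

lemma diamondGraph_adj_iff {p q : DiamondRegion a b} :
    (diamondGraph a b).Adj p q ↔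
      (p.row - q.row = 1 ∨ p.row - q.row = -1) ∧ (p.col - q.col = 1 ∨ p.col - q.col = -1) := by
  unfold row col
  rw [add_sub_add_comm, sub_sub_sub_comm]
  exact sq_add_sq_eq_one_iff

/-- The rows of the diamond from `s` on. -/
def rowsFrom (a b : ℕ) (s : ℤ) : Set (DiamondRegion a b) := {p | s ≤ p.row}

/-- The part of the two rows `s` and `s + 1` of the diamond from column `t` on. Parity leaves at
most one of its vertices in each column, so it induces a union of paths. -/
def zigzag (a b : ℕ) (s t : ℤ) : Set (DiamondRegion a b) :=
  {p | s ≤ p.row ∧ p.row ≤ s + 1 ∧ t ≤ p.col}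

lemma mem_rowsFrom {s : ℤ} {p : DiamondRegion a b} : p ∈ rowsFrom a b s ↔ s ≤ p.row := Iff.rfl

lemma mem_zigzag {s t : ℤ} {p : DiamondRegion a b} :
    p ∈ zigzag a b s t ↔ s ≤ p.row ∧ p.row ≤ s + 1 ∧ t ≤ p.col := Iff.rfl

lemma zigzag_eq_empty {s t : ℤ} (ht : b ≤ t) : zigzag a b s t = ∅ :=
  Set.eq_empty_iff_forall_notMem.mpr fun p hp ↦
    (p.col_mem_Ico.2.trans_le ht).not_ge hp.2.2

lemma zigzag_eq_zigzag_add_one {s t : ℤ} (ht : ∀ p ∈ zigzag a b s t, p.col ≠ t) :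
    zigzag a b s t = zigzag a b s (t + 1) := by
  ext p
  have := ht p
  simp only [mem_zigzag] at this ⊢
  omega

lemma zigzag_union_sdiff_closedNeighbors {s t : ℤ} {q : DiamondRegion a b}
    (hq : q ∈ zigzag a b s t) (hcol : q.col = t + 1) :
    (zigzag a b s t ∪ rowsFrom a b (s + 3)) \ insert q ((diamondGraph a b).neighborSet q) =
      zigzag a b s (t + 3) ∪ rowsFrom a b (s + 3) := by
  ext x
  have hxq : x = q ↔ x.row = q.row ∧ x.col = q.col :=
    ⟨by rintro rfl; simp, fun h ↦ ext_row_col h.1 h.2⟩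
  have := x.row_emod_two_eq
  have := q.row_emod_two_eq
  simp only [Set.mem_sdiff, Set.mem_union, Set.mem_insert_iff, SimpleGraph.mem_neighborSet,
    mem_zigzag, mem_rowsFrom, diamondGraph_adj_iff, hxq] at hq ⊢
  omega

lemma rowsFrom_sdiff_row (s : ℤ) :
    rowsFrom a b s \ {p | p.row = s + 2} = zigzag a b s 0 ∪ rowsFrom a b (s + 3) := by
  ext p
  have := p.col_mem_Ico.1
  simp only [Set.mem_sdiff, Set.mem_union, Set.mem_ofPred_eq, mem_zigzag, mem_rowsFrom]
  omega

variable [Fintype (DiamondRegion a b)] [LinearOrder (DiamondRegion a b)]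

-- The leftmost vertex of the zigzag is isolated, or it is a leaf whose support vertex `q` has the
-- first three columns as its closed neighbourhood.
lemma indepBetti_zigzag_union_rowsFrom_le (s t : ℤ) :
    indepBetti (diamondGraph a b) (zigzag a b s t ∪ rowsFrom a b (s + 3)) ≤
      indepBetti (diamondGraph a b) (rowsFrom a b (s + 3)) := by
  by_cases htb : b ≤ t
  · rw [zigzag_eq_empty htb, Set.empty_union]
  by_cases hcol : ∀ p ∈ zigzag a b s t, p.col ≠ t
  · rw [zigzag_eq_zigzag_add_one hcol]
    exact indepBetti_zigzag_union_rowsFrom_le s (t + 1)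
  push Not at hcol
  obtain ⟨p, hp, hpt⟩ := hcol
  have neighbor : ∀ x ∈ zigzag a b s t ∪ rowsFrom a b (s + 3), (diamondGraph a b).Adj p x →
      x ∈ zigzag a b s t ∧ x.row = 2 * s + 1 - p.row ∧ x.col = t + 1 := by
    intro x hx hpx
    simp only [Set.mem_union, mem_zigzag, mem_rowsFrom, diamondGraph_adj_iff] at hp hx hpx ⊢
    omega
  by_cases hisolated : ∀ x ∈ zigzag a b s t ∪ rowsFrom a b (s + 3), ¬ (diamondGraph a b).Adj p x
  · exact (indepBetti_eq_zero_of_isolated (.inl hp) hisolated).trans_le (Nat.zero_le _)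
  push Not at hisolated
  obtain ⟨q, hq, hpq⟩ := hisolated
  obtain ⟨hqz, hqrow, hqcol⟩ := neighbor q hq hpq
  calc
    _ ≤ indepBetti (diamondGraph a b) ((zigzag a b s t ∪ rowsFrom a b (s + 3)) \
          insert q ((diamondGraph a b).neighborSet q)) :=
      indepBetti_le_of_leaf (.inl hp) hq hpq.ne fun x hx hpx ↦
        have ⟨_, hrow, hcol⟩ := neighbor x hx hpx
        ext_row_col (hrow.trans hqrow.symm) (hcol.trans hqcol.symm)
    _ = indepBetti (diamondGraph a b) (zigzag a b s (t + 3) ∪ rowsFrom a b (s + 3)) := by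
      rw [zigzag_union_sdiff_closedNeighbors hqz hqcol]
    _ ≤ indepBetti (diamondGraph a b) (rowsFrom a b (s + 3)) :=
      indepBetti_zigzag_union_rowsFrom_le s (t + 3)
termination_by (b - t).toNat

-- Since the rows below `s` are absent, a vertex of row `s` only has neighbours in row `s + 1`, and
-- these are also adjacent to the vertex two rows above it.
lemma indepBetti_rowsFrom_le_sdiff_row {s : ℤ} (hs : 0 ≤ s) :
    indepBetti (diamondGraph a b) (rowsFrom a b s) ≤
      indepBetti (diamondGraph a b) (rowsFrom a b s \ {p | p.row = s + 2}) := by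
  refine indepBetti_le_sdiff_of_fold _ fun v (hv : v.row = s + 2) ↦ ?_
  obtain ⟨u, hurow, hucol⟩ := v.exists_row_eq_sub_two (by omega)
  refine ⟨u, ⟨mem_rowsFrom.mpr (by omega), fun (hu : u.row = s + 2) ↦ by omega⟩, fun x hx hux ↦ ?_⟩
  rw [mem_rowsFrom] at hx
  rw [diamondGraph_adj_iff] at hux ⊢
  omega

lemma indepBetti_rowsFrom_le_one {s : ℤ} (hs : 0 ≤ s) :
    indepBetti (diamondGraph a b) (rowsFrom a b s) ≤ 1 := by
  by_cases hsa : a ≤ s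
  · have hempty : rowsFrom a b s = ∅ := Set.eq_empty_iff_forall_notMem.mpr fun p hp ↦
      (p.row_mem_Ico.2.trans_le hsa).not_ge hp
    exact hempty ▸ indepBetti_empty_le_one
  calc
    indepBetti (diamondGraph a b) (rowsFrom a b s)
      ≤ indepBetti (diamondGraph a b) (zigzag a b s 0 ∪ rowsFrom a b (s + 3)) :=
        rowsFrom_sdiff_row s ▸ indepBetti_rowsFrom_le_sdiff_row hs
    _ ≤ indepBetti (diamondGraph a b) (rowsFrom a b (s + 3)) :=
        indepBetti_zigzag_union_rowsFrom_le s 0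
    _ ≤ 1 := indepBetti_rowsFrom_le_one (by omega)
termination_by (a - s).toNat

end Diamond

/-- For the square lattice with free boundary conditions in both diagonal
directions, the zero-energy ground state is at most unique: `dim ker H ≤ 1`. -/
theorem diamond_ground_state_at_most_unique (a b : ℕ) (ha : 1 ≤ a) (hb : 1 ≤ b)
    [Fintype (DiamondRegion a b)] [LinearOrder (DiamondRegion a b)] :
    Module.finrank ℂ ↥(LinearMap.ker (hamiltonian (diamondGraph a b))) ≤ 1 := by
  have rowsFrom_zero : rowsFrom a b 0 = Set.univ :=
    Set.eq_univ_of_forall fun p ↦ p.row_mem_Ico.1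
  calc
    _ ≤ indepBetti (diamondGraph a b) Set.univ := finrank_ker_hamiltonian_le_indepBetti
    _ ≤ 1 := rowsFrom_zero ▸ indepBetti_rowsFrom_le_one le_rfl
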